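/- arXiv:1610.05763 — 3 statements merged into one kernel-verified Lean document; each statement's English description precedes it below -/
import Mathlib

section
/- Let S be an r×r real Fourier matrix with r ≥ 2 satisfying the integrality hypothesis. If the order d_0 is an odd integer, then there exists an index i ∈ {1,…,r−1} with degree k_i ≠ 1. -/
open Complex Matrix BigOperators

namespace FourierPaper

noncomputable section

/-- A Fourier matrix: symmetric, unitary, positive real 0-th column,
integral structure constants `N_{ijk}`. -/
structure IsFourier {r : ℕ} [NeZero r] (S : Matrix (Fin r) (Fin r) ℂ) : Prop where
  symm : ∀ i j, S i j = S j i
  unitary : S * S.conjTranspose = 1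
  col0_real : ∀ i, (S i 0).im = 0
  col0_pos : ∀ i, 0 < (S i 0).re
  structInt : ∀ i j k : Fin r, ∃ z : ℤ,
    (∑ l, S l i * S l j * (starRingEnd ℂ) (S l k) / S l 0) = (z : ℂ)

/-- The Allen matrix of `S`: `s i j = S i j / S i 0`. -/
def allen {r : ℕ} [NeZero r] (S : Matrix (Fin r) (Fin r) ℂ) : Matrix (Fin r) (Fin r) ℂ :=
  fun i j => S i j / S i 0

/-- The character table (first eigenmatrix): `p i j = s i j * s 0 j`. -/
def charTable {r : ℕ} [NeZero r] (S : Matrix (Fin r) (Fin r) ℂ) : Matrix (Fin r) (Fin r) ℂ :=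
  fun i j => allen S i j * allen S 0 j

/-- The norm `d_i = ∑_j |s i j|²`. -/
def nrm {r : ℕ} [NeZero r] (S : Matrix (Fin r) (Fin r) ℂ) (i : Fin r) : ℝ :=
  ∑ j, Complex.normSq (allen S i j)

/-- The degree `k_j = s_{0j}²` (a positive real, as `s 0 j` is a positive real). -/
def deg {r : ℕ} [NeZero r] (S : Matrix (Fin r) (Fin r) ℂ) (j : Fin r) : ℝ :=
  ((allen S 0 j).re) ^ 2

/-- The structure constant `N_{ijk}`. -/
def Nstruct {r : ℕ} [NeZero r] (S : Matrix (Fin r) (Fin r) ℂ) (i j k : Fin r) : ℂ :=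
  ∑ l, S l i * S l j * (starRingEnd ℂ) (S l k) / S l 0

/-- The structure constant `λ_{ijk}` of the character-table basis. -/
def lam {r : ℕ} [NeZero r] (S : Matrix (Fin r) (Fin r) ℂ) (i j k : Fin r) : ℂ :=
  Nstruct S i j k * allen S 0 i * allen S 0 j / allen S 0 k

/-- `S` has all real entries. -/
def RealMatrix {r : ℕ} (S : Matrix (Fin r) (Fin r) ℂ) : Prop :=
  ∀ i j, (S i j).im = 0

/-- Integrality hypothesis: every norm `d_i` is a positive integer dividing `d_0`. -/
def IntegralityHyp {r : ℕ} [NeZero r] (S : Matrix (Fin r) (Fin r) ℂ) : Prop :=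
  ∃ D : Fin r → ℕ, (∀ i, 0 < D i) ∧ (∀ i, nrm S i = (D i : ℝ)) ∧ (∀ i, D i ∣ D 0)

/-!
If every degree is `1`, the dimension homomorphism `∑ j, N i j k * s 0 j = s 0 i * s 0 k` gives
`∑ j, N i j k = 1`, so for each fixed `k` the integer matrix `(N i j k)` has total `r`, which is
also the order. For real `S` its trace is `∑ l, s l k`, which vanishes for `k ≠ 0` by
orthogonality. Since the matrix is symmetric, its total and its trace have the same parity, and
therefore the order is even.
-/

theorem even_sum_sum_sub_sum_diag {ι M : Type*} [AddCommGroup M] {f : ι → ι → M}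
    (hf : ∀ i j, f i j = f j i) (s : Finset ι) :
    Even (∑ i ∈ s, ∑ j ∈ s, f i j - ∑ i ∈ s, f i i) := by
  classical
  induction s using Finset.induction_on with
  | empty => simp
  | insert a s ha ih =>
    have hcross : ∑ i ∈ s, f i a = ∑ j ∈ s, f a j := Finset.sum_congr rfl fun i _ => hf i a
    have hsplit : ∑ i ∈ insert a s, ∑ j ∈ insert a s, f i j - ∑ i ∈ insert a s, f i i =
        (∑ j ∈ s, f a j + ∑ j ∈ s, f a j) + (∑ i ∈ s, ∑ j ∈ s, f i j - ∑ i ∈ s, f i i) := by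
      simp only [Finset.sum_insert ha, Finset.sum_add_distrib, hcross]
      abel
    rw [hsplit]
    exact (Even.add_self _).add ih

section

variable {r : ℕ} {S : Matrix (Fin r) (Fin r) ℂ}

theorem RealMatrix.conj_apply (hreal : RealMatrix S) (i j : Fin r) :
    (starRingEnd ℂ) (S i j) = S i j :=
  Complex.conj_eq_iff_im.mpr (hreal i j)

variable [NeZero r]

theorem Nstruct_comm (S : Matrix (Fin r) (Fin r) ℂ) (i j k : Fin r) :
    Nstruct S i j k = Nstruct S j i k := by
  simp only [Nstruct, mul_comm (S _ i)]

namespace IsFourier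

theorem apply_zero_ne_zero (hS : IsFourier S) (i : Fin r) : S i 0 ≠ 0 := fun h =>
  (hS.col0_pos i).ne' (by rw [h, Complex.zero_re])

theorem ofReal_re_zero_apply (hS : IsFourier S) (j : Fin r) : ((S 0 j).re : ℂ) = S 0 j := by
  rw [hS.symm 0 j]
  exact Complex.ext rfl (hS.col0_real j).symm

theorem conj_zero_apply (hS : IsFourier S) (j : Fin r) : (starRingEnd ℂ) (S 0 j) = S 0 j := by
  rw [← hS.ofReal_re_zero_apply j, Complex.conj_ofReal]

theorem sum_mul_conj (hS : IsFourier S) (l m : Fin r) :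
    ∑ i, S l i * (starRingEnd ℂ) (S m i) = if l = m then 1 else 0 := by
  simpa only [starRingEnd_apply, Matrix.mul_apply, Matrix.conjTranspose_apply, Matrix.one_apply]
    using congrFun₂ hS.unitary l m

theorem allen_zero_eq_ofReal (hS : IsFourier S) (j : Fin r) :
    allen S 0 j = ((S 0 j).re / (S 0 0).re : ℝ) := by
  rw [Complex.ofReal_div, hS.ofReal_re_zero_apply, hS.ofReal_re_zero_apply, allen]

theorem re_allen_zero_pos (hS : IsFourier S) (j : Fin r) : 0 < (allen S 0 j).re := by
  rw [hS.allen_zero_eq_ofReal, Complex.ofReal_re, hS.symm 0 j]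
  exact div_pos (hS.col0_pos j) (hS.col0_pos 0)

theorem im_allen_zero (hS : IsFourier S) (j : Fin r) : (allen S 0 j).im = 0 := by
  rw [hS.allen_zero_eq_ofReal, Complex.ofReal_im]

theorem deg_eq_one_iff (hS : IsFourier S) {j : Fin r} : deg S j = 1 ↔ allen S 0 j = 1 := by
  rw [deg, pow_eq_one_iff_of_nonneg (hS.re_allen_zero_pos j).le two_ne_zero, Complex.ext_iff]
  simp only [hS.im_allen_zero, Complex.one_re, Complex.one_im, and_true]

theorem deg_zero (hS : IsFourier S) : deg S 0 = 1 :=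
  hS.deg_eq_one_iff.mpr (div_self (hS.apply_zero_ne_zero 0))

theorem nrm_zero_eq_sum_deg (hS : IsFourier S) : nrm S 0 = ∑ j, deg S j := by
  simp only [nrm, deg, Complex.normSq_apply, hS.im_allen_zero, mul_zero, add_zero, sq]

theorem sum_Nstruct_mul_allen_zero (hS : IsFourier S) (i k : Fin r) :
    ∑ j, Nstruct S i j k * allen S 0 j = allen S 0 i * allen S 0 k := by
  have hrow (l : Fin r) : ∑ j, S l j * S 0 j = if l = 0 then 1 else 0 := by
    simpa only [hS.conj_zero_apply] using hS.sum_mul_conj l 0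
  calc ∑ j, Nstruct S i j k * allen S 0 j
      = ∑ l, S l i * (starRingEnd ℂ) (S l k) / S l 0 / S 0 0 * ∑ j, S l j * S 0 j := by
        simp only [Nstruct, allen, Finset.sum_mul, Finset.mul_sum]
        rw [Finset.sum_comm]
        refine Finset.sum_congr rfl fun l _ => Finset.sum_congr rfl fun j _ => ?_
        ring
    _ = S 0 i * S 0 k / S 0 0 / S 0 0 := by
        simp only [hrow, mul_ite, mul_one, mul_zero, Finset.sum_ite_eq', Finset.mem_univ, if_true,
          hS.conj_zero_apply]
    _ = allen S 0 i * allen S 0 k := by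
        simp only [allen]
        ring

theorem sum_Nstruct_diag (hS : IsFourier S) (hreal : RealMatrix S) (k : Fin r) :
    ∑ i, Nstruct S i i k = ∑ l, allen S l k := by
  have hnorm (l : Fin r) : ∑ i, S l i * S l i = 1 := by
    simpa only [hreal.conj_apply, if_true] using hS.sum_mul_conj l l
  simp only [Nstruct, allen, hreal.conj_apply]
  rw [Finset.sum_comm]
  simp only [← Finset.sum_div, ← Finset.sum_mul, hnorm, one_mul]

theorem sum_allen_zero_sq_mul_allen (hS : IsFourier S) {k : Fin r} (hk : k ≠ 0) :
    ∑ l, allen S 0 l ^ 2 * allen S l k = 0 := by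
  have hterm (l : Fin r) :
      allen S 0 l ^ 2 * allen S l k = S k l * (starRingEnd ℂ) (S 0 l) / S 0 0 ^ 2 := by
    have hl : S 0 l ≠ 0 := hS.symm l 0 ▸ hS.apply_zero_ne_zero l
    rw [hS.conj_zero_apply, allen, allen, hS.symm l k, hS.symm l 0]
    field_simp
  simp only [hterm, ← Finset.sum_div, hS.sum_mul_conj, if_neg hk, zero_div]

theorem even_rank_of_deg_eq_one (hS : IsFourier S) (hreal : RealMatrix S) (hr : 2 ≤ r)
    (hdeg : ∀ j, deg S j = 1) : Even r := by
  have hallen (j : Fin r) : allen S 0 j = 1 := hS.deg_eq_one_iff.mp (hdeg j)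
  have : Nontrivial (Fin r) := Fin.nontrivial_iff_two_le.mpr hr
  obtain ⟨k, hk⟩ := exists_ne (0 : Fin r)
  have hint (i j : Fin r) : ∃ z : ℤ, Nstruct S i j k = z := hS.structInt i j k
  choose z hz using hint
  have hsymm (i j : Fin r) : z i j = z j i := by
    exact_mod_cast (hz i j).symm.trans ((Nstruct_comm S i j k).trans (hz j i))
  have hrow (i : Fin r) : ∑ j, z i j = 1 := by
    have h := hS.sum_Nstruct_mul_allen_zero i k
    simp only [hallen, mul_one, hz] at h
    exact_mod_cast h
  have htrace : ∑ i, z i i = 0 := by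
    have h := hS.sum_allen_zero_sq_mul_allen hk
    simp only [hallen, one_pow, one_mul, ← hS.sum_Nstruct_diag hreal, hz] at h
    exact_mod_cast h
  have hparity := even_sum_sum_sub_sum_diag hsymm Finset.univ
  rw [htrace, sub_zero] at hparity
  simpa [hrow] using hparity

end IsFourier

theorem stmt3_general (hS : IsFourier S) (hreal : RealMatrix S) (hr : 2 ≤ r) {n : ℕ}
    (hn : nrm S 0 = n) (hodd : Odd n) : ∃ i : Fin r, i ≠ 0 ∧ deg S i ≠ 1 := by
  by_contra! hcon
  have hdeg (j : Fin r) : deg S j = 1 := by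
    rcases eq_or_ne j 0 with rfl | hj
    · exact hS.deg_zero
    · exact hcon j hj
  have hrank : n = r := by
    have h := hn.symm.trans hS.nrm_zero_eq_sum_deg
    simp only [hdeg, Finset.sum_const, Finset.card_univ, Fintype.card_fin, nsmul_one] at h
    exact_mod_cast h
  exact Nat.not_even_iff_odd.mpr hodd (hrank ▸ hS.even_rank_of_deg_eq_one hreal hr hdeg)

end

/-- a real Fourier matrix of rank `r ≥ 2` with odd order `d_0`
has some nontrivial degree different from `1`. -/
theorem stmt3 {r : ℕ} [NeZero r] (S : Matrix (Fin r) (Fin r) ℂ)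
    (hS : IsFourier S) (hreal : RealMatrix S)
    (hr : 2 ≤ r)
    (D : Fin r → ℕ) (hDpos : ∀ i, 0 < D i) (hDeq : ∀ i, nrm S i = (D i : ℝ))
    (hDdvd : ∀ i, D i ∣ D 0)
    (hodd : Odd (D 0)) :
    ∃ i : Fin r, i ≠ 0 ∧ deg S i ≠ 1 :=
  stmt3_general hS hreal hr (hDeq 0) hodd

end

end FourierPaper
end

section
/- Let S be an r×r real Fourier matrix satisfying the integrality hypothesis, with structure constants λ_{iij} ≥ 0 for all i, j. Suppose there is a number k such that k_j = k for every index j with degree k_j ≠ 1, and at least one index j ∈ {1,…,r−1} has k_j ≠ 1. Then k is a power of 2 (k = 2^a for some nonnegative integer a). -/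
open Complex Matrix BigOperators

namespace FourierPaper

noncomputable section

/-!
The columns of the Allen matrix of a real Fourier matrix, viewed as functions of the row index, form
a basis `b_j` of `ℝ^r` that contains `1`, is orthonormal for the trace with weights `S l 0 ^ 2`, and
multiplies pointwise with structure constants `N`. Evaluating `b_g * b_g` at row `0`, nonnegativity
forces `b_g * b_g = 1` whenever `b_g` has degree one. Integrality then makes a product of two such
elements a basis element again, because its coefficient vector is an integer vector of norm one. So
the elements of degree one form an elementary abelian 2-group.

For `g` of degree one, `‖b_g * b_i - b_i‖² = 2 * (1 - N_{iig})`, so `N_{iig}` is `1` if `b_g` fixes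
`b_i` and `0` otherwise. If all elements whose degree is not one take the same value `t` at row `0`,
then evaluating `b_i * b_i` there for such a `b_i` gives `t ^ 2 = 2 ^ a + t * m`, where `2 ^ a` is
the order of the stabilizer of `b_i`. Either `m = 0`, or `t` is rational because `t ^ 2` is, and is
then an integer dividing `2 ^ a`.
-/

lemma exists_natCard_eq_prime_pow {M : Type*} [Monoid M] [Finite M] {p : ℕ} [hp : Fact p.Prime]
    (h : ∀ x : M, x ^ p = 1) : ∃ a : ℕ, Nat.card M = p ^ a := by
  let _ : Group M :=
    { inv x := x ^ (p - 1)
      inv_mul_cancel x := (pow_sub_one_mul hp.out.ne_zero x).trans (h x) }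
  exact IsPGroup.iff_card.1 fun x => ⟨1, by rw [pow_one, h x]⟩

lemma exists_eq_single_units_of_sum_sq_eq_one {ι : Type*} [Fintype ι] [DecidableEq ι] {c : ι → ℤ}
    (h : ∑ j, c j ^ 2 = 1) : ∃ (k : ι) (u : ℤˣ), c = Pi.single k (u : ℤ) := by
  obtain ⟨k, -, hk⟩ : ∃ k ∈ Finset.univ, c k ^ 2 ≠ 0 :=
    Finset.exists_ne_zero_of_sum_ne_zero (h ▸ one_ne_zero)
  have hsplit := Finset.add_sum_erase Finset.univ (fun j => c j ^ 2) (Finset.mem_univ k)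
  have hrest : 0 ≤ ∑ j ∈ Finset.univ.erase k, c j ^ 2 := Finset.sum_nonneg fun j _ => sq_nonneg _
  have hpos : 0 < c k ^ 2 := lt_of_le_of_ne' (sq_nonneg _) hk
  have hunit : c k ^ 2 = 1 := by lia
  have hzero : ∀ j ≠ k, c j = 0 := fun j hj => pow_eq_zero_iff two_ne_zero |>.1 <|
    (Finset.sum_eq_zero_iff_of_nonneg fun j _ => sq_nonneg _).1 (by lia) j
      (Finset.mem_erase.2 ⟨hj, Finset.mem_univ j⟩)
  refine ⟨k, Units.ofPowEqOne (c k) 2 hunit two_ne_zero, funext fun j => ?_⟩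
  rcases eq_or_ne j k with rfl | hj
  · simp
  · rw [hzero j hj, Pi.single_eq_of_ne hj]

open Polynomial in
lemma exists_eq_prime_pow_of_sq_eq_prime_pow_add {p : ℕ} (hp : p.Prime) {q : ℚ} (hq : 0 < q)
    {a : ℕ} {m : ℤ} (h : q ^ 2 = p ^ a + q * m) : ∃ b : ℕ, q = p ^ b := by
  obtain ⟨z, rfl⟩ : IsLocalization.IsInteger ℤ q := by
    refine isInteger_of_is_root_of_monic
      (p := (X ^ 2 - (C m * X + C ((p : ℤ) ^ a)) : ℤ[X])) (by monicity!) ?_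
    simp [h]
    ring
  lift z to ℕ using by simpa using hq.le
  have hz : (z : ℤ) ^ 2 = p ^ a + z * m := by
    rw [algebraMap_int_eq, eq_intCast] at h
    exact_mod_cast h
  have hdvd : (z : ℤ) ∣ (p : ℤ) ^ a := ⟨z - m, by linear_combination -hz⟩
  obtain ⟨b, -, hb⟩ := (Nat.dvd_prime_pow hp).1 (by exact_mod_cast hdvd : z ∣ p ^ a)
  exact ⟨b, by simp [hb]⟩

lemma exists_sq_eq_prime_pow {p : ℕ} (hp : p.Prime) {t : ℝ} (ht : 0 < t)
    (hrat : ∃ q : ℚ, (q : ℝ) = t ^ 2) {a : ℕ} {m : ℤ} (h : t ^ 2 = p ^ a + t * m) :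
    ∃ b : ℕ, t ^ 2 = p ^ b := by
  rcases eq_or_ne m 0 with rfl | hm
  · exact ⟨a, by simpa using h⟩
  obtain ⟨q, hq⟩ := hrat
  have hm' : (m : ℝ) ≠ 0 := Int.cast_ne_zero.2 hm
  obtain ⟨s, rfl⟩ : ∃ s : ℚ, (s : ℝ) = t :=
    ⟨(q - p ^ a) / m, by push_cast; rw [div_eq_iff hm', hq]; linear_combination h⟩
  obtain ⟨b, rfl⟩ :=
    exists_eq_prime_pow_of_sq_eq_prime_pow_add hp (by exact_mod_cast ht) (by exact_mod_cast h)
  exact ⟨b * 2, by push_cast; rw [pow_mul]⟩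

/-- A self-dual integral fusion basis, realised as a basis `val` of real functions on the finite set
`κ` of characters: it contains `1`, is orthonormal for the trace `f ↦ weight ⬝ᵥ f`, and has integer
structure constants `coeff`, those of squares being nonnegative. The character `base` is the one
giving the dimensions. For a real Fourier matrix `S`, the functions are the columns of its Allen
matrix and the weights are the squares `S l 0 ^ 2`. -/
structure FusionBasis (ι κ : Type*) [Fintype ι] [DecidableEq ι] [Fintype κ] where
  weight : κ → ℝ
  val : ι → κ → ℝ
  coeff : ι → ι → ι → ℤ
  unit : ι
  base : κ
  weight_pos : ∀ x, 0 < weight x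
  orthonormal : ∀ i j, weight ⬝ᵥ (val i * val j) = if i = j then 1 else 0
  val_unit : val unit = 1
  val_mul_val : ∀ i j, val i * val j = ∑ k, (coeff i j k : ℝ) • val k
  val_base_pos : ∀ i, 0 < val i base
  coeff_self_nonneg : ∀ i k, 0 ≤ coeff i i k

namespace FusionBasis

variable {ι κ : Type*} [Fintype ι] [DecidableEq ι] [Fintype κ] (F : FusionBasis ι κ)

/-- The dimension `s 0 j` of a basis element, whose square is the degree `k_j`. -/
def dim (j : ι) : ℝ := F.val j F.base

lemma weight_dotProduct_mul_self_nonneg (f : κ → ℝ) : 0 ≤ F.weight ⬝ᵥ (f * f) :=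
  Finset.sum_nonneg fun x _ => mul_nonneg (F.weight_pos x).le (mul_self_nonneg (f x))

lemma weight_dotProduct_mul_self_eq_zero {f : κ → ℝ} : F.weight ⬝ᵥ (f * f) = 0 ↔ f = 0 := by
  refine ⟨fun h => funext fun x => ?_, fun h => by simp [h]⟩
  have hx := (Finset.sum_eq_zero_iff_of_nonneg fun x _ =>
    mul_nonneg (F.weight_pos x).le (mul_self_nonneg (f x))).1 h x (Finset.mem_univ x)
  exact mul_self_eq_zero.1 ((mul_eq_zero.1 hx).resolve_left (F.weight_pos x).ne')

lemma val_injective : Function.Injective F.val := fun i j h => by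
  by_contra hij
  have hone := F.orthonormal i j
  rw [h, F.orthonormal, if_pos rfl, if_neg hij] at hone
  exact one_ne_zero hone

lemma coeff_eq_dotProduct (i j k : ι) :
    (F.coeff i j k : ℝ) = F.weight ⬝ᵥ (F.val i * F.val j * F.val k) := by
  rw [F.val_mul_val]
  simp [Finset.sum_mul, dotProduct_sum, F.orthonormal]

lemma sum_coeff_sq (i j : ι) :
    ∑ k, (F.coeff i j k : ℝ) ^ 2 = F.weight ⬝ᵥ (F.val i * F.val j * (F.val i * F.val j)) := by
  calc ∑ k, (F.coeff i j k : ℝ) ^ 2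
      = ∑ k, (F.coeff i j k : ℝ) * (F.weight ⬝ᵥ (F.val i * F.val j * F.val k)) := by
        simp only [sq, F.coeff_eq_dotProduct]
    _ = F.weight ⬝ᵥ (F.val i * F.val j * ∑ k, (F.coeff i j k : ℝ) • F.val k) := by
        simp only [Finset.mul_sum, mul_smul_comm, dotProduct_sum, dotProduct_smul, smul_eq_mul]
    _ = F.weight ⬝ᵥ (F.val i * F.val j * (F.val i * F.val j)) := by rw [← F.val_mul_val]

lemma coeff_self_unit (i : ι) : F.coeff i i F.unit = 1 := by
  have h : (F.coeff i i F.unit : ℝ) = 1 := by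
    rw [F.coeff_eq_dotProduct, F.val_unit, mul_one, F.orthonormal, if_pos rfl]
  exact_mod_cast h

lemma dim_mul_dim (i j : ι) : F.dim i * F.dim j = ∑ k, (F.coeff i j k : ℝ) * F.dim k := by
  simpa [dim] using congrFun (F.val_mul_val i j) F.base

lemma dim_unit : F.dim F.unit = 1 := congrFun F.val_unit F.base

variable {F}

lemma coeff_self_eq_zero {g k : ι} (hg : F.dim g = 1) (hk : k ≠ F.unit) : F.coeff g g k = 0 := by
  have hnonneg : ∀ k, 0 ≤ (F.coeff g g k : ℝ) * F.dim k := fun k =>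
    mul_nonneg (Int.cast_nonneg (F.coeff_self_nonneg g k)) (F.val_base_pos k).le
  have hsum := F.dim_mul_dim g g
  rw [hg, ← Finset.add_sum_erase _ _ (Finset.mem_univ F.unit), F.coeff_self_unit, F.dim_unit,
    Int.cast_one, mul_one, left_eq_add, Finset.sum_eq_zero_iff_of_nonneg fun k _ => hnonneg k]
    at hsum
  simpa [(F.val_base_pos k).ne', dim] using hsum k (Finset.mem_erase.2 ⟨hk, Finset.mem_univ k⟩)

lemma val_mul_self_eq_one {g : ι} (hg : F.dim g = 1) : F.val g * F.val g = 1 := by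
  rw [F.val_mul_val, Finset.sum_eq_single_of_mem F.unit (Finset.mem_univ _)
    fun k _ hk => by rw [coeff_self_eq_zero hg hk, Int.cast_zero, zero_smul],
    F.coeff_self_unit, Int.cast_one, one_smul, F.val_unit]

lemma exists_val_eq_mul {g h : ι} (hg : F.dim g = 1) (hh : F.dim h = 1) :
    ∃ k, F.dim k = 1 ∧ F.val k = F.val g * F.val h := by
  have hnorm : ∑ k, (F.coeff g h k : ℝ) ^ 2 = 1 := by
    rw [F.sum_coeff_sq, mul_mul_mul_comm, val_mul_self_eq_one hg, val_mul_self_eq_one hh,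
      ← F.val_unit, F.orthonormal, if_pos rfl]
  obtain ⟨k, u, hu⟩ := exists_eq_single_units_of_sum_sq_eq_one (by exact_mod_cast hnorm)
  have hval : F.val g * F.val h = ((u : ℤ) : ℝ) • F.val k := by
    simp [F.val_mul_val, hu, Pi.single_apply]
  have hdim : 1 = ((u : ℤ) : ℝ) * F.dim k := by
    have hbase : F.dim g * F.dim h = ((u : ℤ) : ℝ) * F.dim k := congrFun hval F.base
    rwa [hg, hh, mul_one] at hbase
  have hpos : 0 < F.dim k := F.val_base_pos k
  rcases Int.units_eq_one_or u with rfl | rfl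
  · exact ⟨k, by simpa using hdim.symm, by simpa using hval.symm⟩
  · push_cast at hdim
    linarith

lemma weight_dotProduct_sub_mul_self {g : ι} (hg : F.dim g = 1) (i : ι) :
    F.weight ⬝ᵥ ((F.val g * F.val i - F.val i) * (F.val g * F.val i - F.val i)) =
      2 * (1 - F.coeff i i g) := by
  have hexpand : (F.val g * F.val i - F.val i) * (F.val g * F.val i - F.val i) =
      (2 : ℝ) • (F.val i * F.val i - F.val i * F.val i * F.val g) := by
    rw [two_smul]
    linear_combination (F.val i * F.val i) * val_mul_self_eq_one hg
  rw [hexpand, dotProduct_smul, dotProduct_sub, F.orthonormal, if_pos rfl,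
    ← F.coeff_eq_dotProduct, smul_eq_mul]

open Classical in
lemma coeff_self_eq_ite {g : ι} (hg : F.dim g = 1) (i : ι) :
    F.coeff i i g = if F.val g * F.val i = F.val i then 1 else 0 := by
  have hdist := weight_dotProduct_sub_mul_self hg i
  have hle : F.coeff i i g ≤ 1 := by
    have hnonneg := F.weight_dotProduct_mul_self_nonneg (F.val g * F.val i - F.val i)
    have : (F.coeff i i g : ℝ) ≤ 1 := by linarith
    exact_mod_cast this
  have hiff : F.coeff i i g = 1 ↔ F.val g * F.val i = F.val i := by
    rw [← sub_eq_zero (b := F.val i), ← F.weight_dotProduct_mul_self_eq_zero, hdist, mul_eq_zero,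
      or_iff_right two_ne_zero, sub_eq_zero]
    exact_mod_cast eq_comm
  have hnonneg := F.coeff_self_nonneg i g
  split_ifs with hfix
  · exact hiff.2 hfix
  · have := mt hiff.1 hfix
    lia

variable (F)

/-- The submonoid of `κ → ℝ` formed by the basis elements of dimension one that fix `val i` under
multiplication; its order is the number of indices `g` of dimension one with `coeff i i g ≠ 0`. -/
def stabilizer (i : ι) : Submonoid (κ → ℝ) where
  carrier := F.val '' {g | F.dim g = 1 ∧ F.val g * F.val i = F.val i}
  one_mem' := ⟨F.unit, ⟨F.dim_unit, by rw [F.val_unit, one_mul]⟩, F.val_unit⟩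
  mul_mem' := by
    rintro _ _ ⟨g, ⟨hg, hgi⟩, rfl⟩ ⟨h, ⟨hh, hhi⟩, rfl⟩
    obtain ⟨k, hk, hgh⟩ := exists_val_eq_mul hg hh
    exact ⟨k, ⟨hk, by rw [hgh, mul_assoc, hhi, hgi]⟩, hgh⟩

lemma exists_natCard_stabilizer_eq_two_pow (i : ι) :
    ∃ a : ℕ, Nat.card (F.stabilizer i) = 2 ^ a := by
  have : Finite (F.stabilizer i) := (Set.toFinite _).image F.val
  refine exists_natCard_eq_prime_pow ?_
  rintro ⟨_, g, ⟨hg, -⟩, rfl⟩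
  exact Subtype.ext ((sq _).trans (val_mul_self_eq_one hg))

open Classical in
lemma sum_coeff_self_eq_natCard_stabilizer (i : ι) :
    ∑ g with F.dim g = 1, F.coeff i i g = Nat.card (F.stabilizer i) := by
  calc ∑ g with F.dim g = 1, F.coeff i i g
      = ∑ g with F.dim g = 1, if F.val g * F.val i = F.val i then 1 else 0 :=
        Finset.sum_congr rfl fun g hg => coeff_self_eq_ite (Finset.mem_filter.1 hg).2 i
    _ = (Finset.univ.filter fun g => F.dim g = 1 ∧ F.val g * F.val i = F.val i).card := by
        rw [Finset.sum_boole, Finset.filter_filter]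
    _ = Nat.card (F.stabilizer i) := by
        rw [← Nat.card_eq_finsetCard]
        refine congrArg _ ((Nat.card_image_of_injective F.val_injective _).trans ?_).symm
        simp [Fintype.card_subtype]

variable {F}

lemma exists_dim_sq_eq_two_pow_add {i : ι} (hi : ∀ j, F.dim j ≠ 1 → F.dim j = F.dim i) :
    ∃ (a : ℕ) (m : ℤ), F.dim i ^ 2 = 2 ^ a + F.dim i * m := by
  classical
  obtain ⟨a, ha⟩ := F.exists_natCard_stabilizer_eq_two_pow i
  refine ⟨a, ∑ j with F.dim j ≠ 1, F.coeff i i j, ?_⟩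
  have hlinear : ∑ j with F.dim j = 1, (F.coeff i i j : ℝ) * F.dim j = 2 ^ a := by
    rw [Finset.sum_congr rfl fun j hj => by rw [(Finset.mem_filter.1 hj).2, mul_one]]
    exact_mod_cast (F.sum_coeff_self_eq_natCard_stabilizer i).trans (congrArg _ ha)
  have hrest : ∑ j with F.dim j ≠ 1, (F.coeff i i j : ℝ) * F.dim j =
      F.dim i * ((∑ j with F.dim j ≠ 1, F.coeff i i j : ℤ) : ℝ) := by
    rw [Int.cast_sum, Finset.mul_sum]
    exact Finset.sum_congr rfl fun j hj => by rw [hi j (Finset.mem_filter.1 hj).2, mul_comm]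
  rw [sq, F.dim_mul_dim, ← Finset.sum_filter_add_sum_filter_not _ (fun j => F.dim j = 1),
    hlinear, hrest]

theorem exists_dim_sq_eq_two_pow {i : ι} (hi : ∀ j, F.dim j ≠ 1 → F.dim j = F.dim i)
    (hrat : ∃ q : ℚ, (q : ℝ) = F.dim i ^ 2) : ∃ a : ℕ, F.dim i ^ 2 = 2 ^ a := by
  obtain ⟨a, m, h⟩ := exists_dim_sq_eq_two_pow_add hi
  exact_mod_cast exists_sq_eq_prime_pow Nat.prime_two (F.val_base_pos i) hrat (by exact_mod_cast h)

end FusionBasis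

namespace IsFourier

variable {r : ℕ} [NeZero r] {S : Matrix (Fin r) (Fin r) ℂ}

lemma ofReal_re_col_zero (hS : IsFourier S) (i : Fin r) : ((S i 0).re : ℂ) = S i 0 :=
  Complex.ext rfl (hS.col0_real i).symm

lemma allen_zero (hS : IsFourier S) (j : Fin r) :
    allen S 0 j = (((S j 0).re / (S 0 0).re : ℝ) : ℂ) := by
  rw [allen, hS.symm 0 j, Complex.ofReal_div, hS.ofReal_re_col_zero, hS.ofReal_re_col_zero]

lemma deg_eq (hS : IsFourier S) (j : Fin r) : deg S j = ((S j 0).re / (S 0 0).re) ^ 2 := by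
  rw [deg, hS.allen_zero, Complex.ofReal_re]

lemma sum_normSq (hS : IsFourier S) (i : Fin r) : ∑ j, Complex.normSq (S i j) = 1 := by
  have h : (S * S.conjTranspose) i i = 1 := by rw [hS.unitary, one_apply_eq]
  simp only [mul_apply, conjTranspose_apply, RCLike.star_def, Complex.mul_conj] at h
  exact_mod_cast h

lemma nrm_eq (hS : IsFourier S) (i : Fin r) : nrm S i = ((S i 0).re ^ 2)⁻¹ := by
  have h0 : Complex.normSq (S i 0) = (S i 0).re ^ 2 := by
    rw [← hS.ofReal_re_col_zero, Complex.normSq_ofReal, Complex.ofReal_re, sq]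
  simp only [nrm, allen, Complex.normSq_div, h0]
  rw [← Finset.sum_div, hS.sum_normSq, one_div]

lemma deg_eq_nrm_div_nrm (hS : IsFourier S) (j : Fin r) : deg S j = nrm S 0 / nrm S j := by
  rw [hS.deg_eq, hS.nrm_eq, hS.nrm_eq, div_pow, inv_div_inv]

lemma exists_deg_eq_natCast (hS : IsFourier S) (hint : IntegralityHyp S) (j : Fin r) :
    ∃ n : ℕ, deg S j = n := by
  obtain ⟨D, hpos, hD, hdvd⟩ := hint
  refine ⟨D 0 / D j, ?_⟩
  rw [hS.deg_eq_nrm_div_nrm, hD, hD, Nat.cast_div (hdvd j) (Nat.cast_ne_zero.2 (hpos j).ne')]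

lemma lam_re_nonneg_iff (hS : IsFourier S) {i j k : Fin r} :
    0 ≤ (lam S i j k).re ↔ 0 ≤ (Nstruct S i j k).re := by
  have hpos : ∀ j, 0 < (S j 0).re / (S 0 0).re := fun j => div_pos (hS.col0_pos j) (hS.col0_pos 0)
  rw [lam, hS.allen_zero, hS.allen_zero, hS.allen_zero, Complex.div_ofReal_re,
    Complex.re_mul_ofReal, Complex.re_mul_ofReal, le_div_iff₀ (hpos k), zero_mul,
    mul_nonneg_iff_of_pos_right (hpos j), mul_nonneg_iff_of_pos_right (hpos i)]

/-- The integer equal to the structure constant `N_{ijk}`. -/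
def structConst (hS : IsFourier S) (i j k : Fin r) : ℤ := (hS.structInt i j k).choose

lemma Nstruct_eq (hS : IsFourier S) (i j k : Fin r) : Nstruct S i j k = hS.structConst i j k :=
  (hS.structInt i j k).choose_spec

lemma structConst_nonneg_iff (hS : IsFourier S) {i j k : Fin r} :
    0 ≤ hS.structConst i j k ↔ 0 ≤ (lam S i j k).re := by
  rw [hS.lam_re_nonneg_iff, hS.Nstruct_eq, Complex.intCast_re, Int.cast_nonneg_iff]

variable {R : Matrix (Fin r) (Fin r) ℝ}

lemma isSymm_of_map_ofReal (hR : IsFourier (R.map ofReal)) : R.IsSymm :=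
  Matrix.ext fun i j => Complex.ofReal_injective (hR.symm j i)

lemma mul_self_of_map_ofReal (hR : IsFourier (R.map ofReal)) : R * R = 1 := by
  nth_rw 2 [← hR.isSymm_of_map_ofReal]
  ext i j
  have h := congrFun₂ hR.unitary i j
  simp only [mul_apply, conjTranspose_apply, map_apply, RCLike.star_def, Complex.conj_ofReal,
    one_apply] at h
  simp only [mul_apply, transpose_apply, one_apply]
  apply Complex.ofReal_injective
  push_cast
  exact h.trans (by split_ifs <;> simp)

lemma structConst_of_map_ofReal (hR : IsFourier (R.map ofReal)) (i j k : Fin r) :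
    (hR.structConst i j k : ℝ) = ∑ l, R l i * R l j / R l 0 * R l k := by
  have h := hR.Nstruct_eq i j k
  simp only [Nstruct, map_apply, Complex.conj_ofReal] at h
  apply Complex.ofReal_injective
  push_cast
  simp only [div_mul_eq_mul_div]
  exact h.symm

lemma sum_structConst_mul (hR : IsFourier (R.map ofReal)) (i j l : Fin r) :
    ∑ k, (hR.structConst i j k : ℝ) * R l k = R l i * R l j / R l 0 := by
  let v : Fin r → ℝ := fun l => R l i * R l j / R l 0
  calc ∑ k, (hR.structConst i j k : ℝ) * R l k
      = ((v ᵥ* R) ᵥ* R) l := Finset.sum_congr rfl fun k _ => by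
        rw [hR.structConst_of_map_ofReal, ← hR.isSymm_of_map_ofReal.apply]
        rfl
    _ = v l := by rw [vecMul_vecMul, hR.mul_self_of_map_ofReal, vecMul_one]

/-- The fusion basis of a real Fourier matrix: the columns of its Allen matrix, as functions of the
row index. -/
def fusionBasis (hR : IsFourier (R.map ofReal)) (hlam : ∀ i k, 0 ≤ (lam (R.map ofReal) i i k).re) :
    FusionBasis (Fin r) (Fin r) where
  weight l := R l 0 ^ 2
  val j l := R l j / R l 0
  coeff := hR.structConst
  unit := 0
  base := 0
  weight_pos l := pow_pos (hR.col0_pos l) 2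
  orthonormal i j := by
    have h := congrFun₂ hR.mul_self_of_map_ofReal i j
    rw [mul_apply, one_apply] at h
    rw [← h]
    refine Finset.sum_congr rfl fun l _ => ?_
    have hl : R l 0 ≠ 0 := (hR.col0_pos l).ne'
    simp only [Pi.mul_apply, hR.isSymm_of_map_ofReal.apply l i]
    field_simp
  val_unit := funext fun l => div_self (hR.col0_pos l).ne'
  val_mul_val i j := funext fun l => by
    simp only [Pi.mul_apply, Finset.sum_apply, Pi.smul_apply, smul_eq_mul, ← mul_div_assoc]
    rw [← Finset.sum_div, hR.sum_structConst_mul, div_mul_eq_mul_div]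
  val_base_pos i :=
    div_pos (hR.isSymm_of_map_ofReal.apply 0 i ▸ hR.col0_pos i) (hR.col0_pos 0)
  coeff_self_nonneg i k := hR.structConst_nonneg_iff.2 (hlam i k)

lemma dim_fusionBasis (hR : IsFourier (R.map ofReal))
    (hlam : ∀ i k, 0 ≤ (lam (R.map ofReal) i i k).re) (j : Fin r) :
    (hR.fusionBasis hlam).dim j = R j 0 / R 0 0 :=
  congrArg (· / R 0 0) (hR.isSymm_of_map_ofReal.apply j 0)

lemma deg_eq_dim_fusionBasis_sq (hR : IsFourier (R.map ofReal))
    (hlam : ∀ i k, 0 ≤ (lam (R.map ofReal) i i k).re) (j : Fin r) :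
    deg (R.map ofReal) j = (hR.fusionBasis hlam).dim j ^ 2 := by
  simp only [hR.deg_eq, hR.dim_fusionBasis, map_apply, Complex.ofReal_re]

end IsFourier

lemma RealMatrix.exists_map_ofReal_eq {r : ℕ} {S : Matrix (Fin r) (Fin r) ℂ} (hS : RealMatrix S) :
    ∃ R : Matrix (Fin r) (Fin r) ℝ, R.map ofReal = S :=
  ⟨S.map re, Matrix.ext fun i j => Complex.ext rfl (hS i j).symm⟩

theorem stmt5_general {r : ℕ} [NeZero r] (S : Matrix (Fin r) (Fin r) ℂ)
    (hS : IsFourier S) (hreal : RealMatrix S) (hlam : ∀ i j, 0 ≤ (lam S i i j).re)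
    (k : ℝ) (hrat : ∃ q : ℚ, (q : ℝ) = k) (hk : ∀ j : Fin r, deg S j ≠ 1 → deg S j = k)
    (hex : ∃ j : Fin r, deg S j ≠ 1) :
    ∃ a : ℕ, k = (2 : ℝ) ^ a := by
  obtain ⟨R, rfl⟩ := hreal.exists_map_ofReal_eq
  let F := hS.fusionBasis hlam
  have hdeg : ∀ j, deg (R.map ofReal) j = F.dim j ^ 2 := hS.deg_eq_dim_fusionBasis_sq hlam
  have hdim : ∀ j, 0 ≤ F.dim j := fun j => (F.val_base_pos j).le
  obtain ⟨i, hi⟩ := hex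
  obtain rfl := hk i hi
  simp only [hdeg, ne_eq, pow_eq_one_iff_of_nonneg (hdim _) two_ne_zero,
    sq_eq_sq₀ (hdim _) (hdim _)] at hrat hk ⊢
  exact F.exists_dim_sq_eq_two_pow hk hrat

/-- for a real Fourier matrix with nonnegative structure constants
`λ_{iij}`, if all degrees different from `1` are equal to a common value `k`
(and some nontrivial degree is different from `1`), then `k` is a power of `2`. -/
theorem stmt5 {r : ℕ} [NeZero r] (S : Matrix (Fin r) (Fin r) ℂ)
    (hS : IsFourier S) (hreal : RealMatrix S)
    (hint : IntegralityHyp S)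
    (hlam : ∀ i j, 0 ≤ (lam S i i j).re ∧ (lam S i i j).im = 0)
    (k : ℝ) (hk : ∀ j : Fin r, deg S j ≠ 1 → deg S j = k)
    (hex : ∃ j : Fin r, j ≠ 0 ∧ deg S j ≠ 1) :
    ∃ a : ℕ, k = (2 : ℝ) ^ a := by
  obtain ⟨i, -, hi⟩ := hex
  obtain ⟨n, hn⟩ := hS.exists_deg_eq_natCast hint i
  exact stmt5_general S hS hreal (fun i j => (hlam i j).1) k ⟨n, by simp [← hk i hi, hn]⟩ hk ⟨i, hi⟩

end

end FourierPaper
end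

section
/- Let S be a 2×2 Fourier matrix satisfying the integrality hypothesis. Then S = (1/√2)·[[1, 1], [1, −1]], i.e., S_{00} = S_{01} = S_{10} = 1/√2 and S_{11} = −1/√2. -/
/-!
The rows of a unitary matrix are unit vectors, so `d_i = 1 / |S_{i0}|²`; the `0`-th column is a unit
vector as well, so the reciprocals of the norms sum to `1`. In size `2` the only solution of
`1 / d_0 + 1 / d_1 = 1` in integers is `d_0 = d_1 = 2`. This determines the positive `0`-th column,
symmetry then determines `S_{01}`, and orthogonality of the rows determines `S_{11}`.
-/

open Complex Matrix BigOperators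

namespace FourierPaper

noncomputable section

section Unitary

variable {n : Type*} [Fintype n] [DecidableEq n] {U : Matrix n n ℂ}

theorem sum_normSq_row_of_mem_unitaryGroup (hU : U ∈ unitaryGroup n ℂ) (i : n) :
    ∑ j, normSq (U i j) = 1 := by
  have row_inner_self : (U * star U) i i = 1 := by
    rw [mem_unitaryGroup_iff.mp hU, one_apply_eq]
  simp only [mul_apply, star_apply, star_def, mul_conj] at row_inner_self
  exact_mod_cast row_inner_self

theorem sum_normSq_col_of_mem_unitaryGroup (hU : U ∈ unitaryGroup n ℂ) (j : n) :
    ∑ i, normSq (U i j) = 1 := by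
  simpa only [star_apply, star_def, normSq_conj] using
    sum_normSq_row_of_mem_unitaryGroup (Unitary.star_mem hU) j

theorem sum_row_mul_star_row_of_mem_unitaryGroup {R : Type*} [CommRing R] [StarRing R]
    {U : Matrix n n R} (hU : U ∈ unitaryGroup n R) {i j : n} (hij : i ≠ j) :
    ∑ k, U i k * star (U j k) = 0 := by
  have row_inner : (U * star U) i j = 0 := by
    rw [mem_unitaryGroup_iff.mp hU, one_apply_ne hij]
  simpa only [mul_apply, star_apply] using row_inner

end Unitary

theorem eq_two_of_inv_add_inv_eq_one {K : Type*} [Field K] [CharZero K] {a b : ℤ}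
    (ha : a ≠ 0) (hb : b ≠ 0) (h : (a : K)⁻¹ + (b : K)⁻¹ = 1) : a = 2 ∧ b = 2 := by
  have ha' : (a : K) ≠ 0 := Int.cast_ne_zero.mpr ha
  have hb' : (b : K) ≠ 0 := Int.cast_ne_zero.mpr hb
  have add_eq_mul : b + a = a * b := by
    field_simp at h
    exact_mod_cast h
  have sub_one_mul_sub_one : (a - 1) * (b - 1) = 1 := by linear_combination -add_eq_mul
  rcases Int.mul_eq_one_iff_eq_one_or_neg_one.mp sub_one_mul_sub_one with h | h <;> omega

section Norms

open scoped ComplexOrder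

variable {r : ℕ} [NeZero r] {S : Matrix (Fin r) (Fin r) ℂ}

theorem nrm_eq_inv_normSq (hS : S ∈ unitaryGroup (Fin r) ℂ) (i : Fin r) :
    nrm S i = (normSq (S i 0))⁻¹ := by
  -- If `S i 0 = 0`, both sides are `0` because `x / 0 = 0`.
  simp only [nrm, allen, normSq_div]
  rw [← Finset.sum_div, sum_normSq_row_of_mem_unitaryGroup hS, one_div]

theorem sum_inv_nrm (hS : S ∈ unitaryGroup (Fin r) ℂ) : ∑ i, (nrm S i)⁻¹ = 1 := by
  simpa only [nrm_eq_inv_normSq hS, inv_inv] using sum_normSq_col_of_mem_unitaryGroup hS 0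

theorem nrm_ne_zero (hS : S ∈ unitaryGroup (Fin r) ℂ) {i : Fin r} (hi : S i 0 ≠ 0) :
    nrm S i ≠ 0 := by
  simpa only [nrm_eq_inv_normSq hS, ne_eq, inv_eq_zero, normSq_eq_zero] using hi

theorem apply_zero_eq_inv_sqrt_nrm (hS : S ∈ unitaryGroup (Fin r) ℂ) {i : Fin r}
    (hi : 0 ≤ S i 0) : S i 0 = ((√(nrm S i) : ℝ) : ℂ)⁻¹ := by
  rw [nrm_eq_inv_normSq hS, normSq_eq_norm_sq, Real.sqrt_inv, Real.sqrt_sq (norm_nonneg _),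
    ofReal_inv, inv_inv]
  exact (norm_of_nonneg' hi).symm

theorem nrm_eq_two {S : Matrix (Fin 2) (Fin 2) ℂ} (hS : S ∈ unitaryGroup (Fin 2) ℂ)
    (hne : ∀ i, S i 0 ≠ 0) (hint : ∀ i, ∃ d : ℤ, nrm S i = d) (i : Fin 2) : nrm S i = 2 := by
  choose d hd using hint
  have d_ne_zero (i) : d i ≠ 0 := by
    exact_mod_cast hd i ▸ nrm_ne_zero hS (hne i)
  have sum_inv : (d 0 : ℝ)⁻¹ + (d 1 : ℝ)⁻¹ = 1 := by
    simpa only [Fin.sum_univ_two, hd] using sum_inv_nrm hS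
  obtain ⟨d_zero, d_one⟩ := eq_two_of_inv_add_inv_eq_one (d_ne_zero 0) (d_ne_zero 1) sum_inv
  fin_cases i <;> simp [hd, d_zero, d_one]

namespace IsFourier

theorem mem_unitaryGroup (hS : IsFourier S) : S ∈ unitaryGroup (Fin r) ℂ :=
  mem_unitaryGroup_iff.mpr hS.unitary

theorem isSymm (hS : IsFourier S) : S.IsSymm :=
  IsSymm.ext fun i j => hS.symm j i

theorem zero_lt_apply_zero (hS : IsFourier S) (i : Fin r) : 0 < S i 0 :=
  pos_iff.mpr ⟨hS.col0_pos i, (hS.col0_real i).symm⟩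

end IsFourier

theorem stmt9_general {S : Matrix (Fin 2) (Fin 2) ℂ} (hS : S ∈ unitaryGroup (Fin 2) ℂ)
    (hsymm : S.IsSymm) (hpos : ∀ i, 0 < S i 0) (hint : ∀ i, ∃ d : ℤ, nrm S i = d) :
    S = ((√2 : ℝ) : ℂ)⁻¹ • !![1, 1; 1, -1] := by
  have col_zero (i) : S i 0 = ((√2 : ℝ) : ℂ)⁻¹ := by
    rw [apply_zero_eq_inv_sqrt_nrm hS (hpos i).le, nrm_eq_two hS (fun j => (hpos j).ne') hint]
  have h01 : S 0 1 = ((√2 : ℝ) : ℂ)⁻¹ := (hsymm.apply 1 0).trans (col_zero 1)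
  have h11 : S 1 1 = -((√2 : ℝ) : ℂ)⁻¹ := by
    have orthogonal := sum_row_mul_star_row_of_mem_unitaryGroup hS one_ne_zero
    rw [Fin.sum_univ_two, col_zero, col_zero, h01, ← add_mul] at orthogonal
    have star_ne_zero : star ((√2 : ℝ) : ℂ)⁻¹ ≠ 0 := by simp
    exact eq_neg_of_add_eq_zero_right ((mul_eq_zero_iff_right star_ne_zero).mp orthogonal)
  ext i j
  fin_cases i <;> fin_cases j <;> simp [col_zero, h01, h11]

end Norms

/-- the unique `2 × 2` Fourier matrix satisfying the integrality
hypothesis is `(1/√2)·[[1,1],[1,−1]]`. -/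
theorem stmt9 (S : Matrix (Fin 2) (Fin 2) ℂ)
    (hS : IsFourier S) (hint : IntegralityHyp S) :
    S 0 0 = ((Real.sqrt 2 : ℝ) : ℂ)⁻¹ ∧ S 0 1 = ((Real.sqrt 2 : ℝ) : ℂ)⁻¹ ∧
    S 1 0 = ((Real.sqrt 2 : ℝ) : ℂ)⁻¹ ∧ S 1 1 = -((Real.sqrt 2 : ℝ) : ℂ)⁻¹ := by
  obtain ⟨D, -, hD, -⟩ := hint
  simp [stmt9_general hS.mem_unitaryGroup hS.isSymm hS.zero_lt_apply_zero fun i => ⟨D i, hD i⟩]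

end

end FourierPaper
end
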